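/- Under the stated setup and assumptions, the individual canonical angles after rank-k truncation satisfy max{sin θ_j', sin ν_j'} ≤ γ_j · (γ_k^{2q}/(1−γ_k)) · ‖Ω_2Ω_1†‖₂ for every j = 1,…,k, where θ_j' and ν_j' are the canonical angles between the column spaces of U_k and Û_k, and of V_k and V̂_k, respectively, arranged increasingly. -/

import Mathlib

open scoped ENNReal
open Matrix

/-- The `j`-th largest singular value (0-indexed) of a complex matrix,
obtained as the decreasingly sorted square roots of the eigenvalues of `Mᴴ * M`. -/
noncomputable def sval {m n : ℕ} (M : Matrix (Fin m) (Fin n) ℂ) (j : ℕ) : ℝ :=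
  (List.insertionSort (· ≥ ·)
    ((List.ofFn (Matrix.isHermitian_conjTranspose_mul_self M).eigenvalues).map Real.sqrt)).getD j 0

/-- The Schatten-`p` norm (`p = ∞` gives the spectral norm). -/
noncomputable def schatten {m n : ℕ} (p : ℝ≥0∞) (M : Matrix (Fin m) (Fin n) ℂ) : ℝ :=
  if p = ⊤ then sval M 0
  else (∑ j ∈ Finset.range n, sval M j ^ p.toReal) ^ (1 / p.toReal)

/-- Moore–Penrose pseudoinverse of a full-row-rank matrix. -/
noncomputable def rpinv {a b : ℕ} (M : Matrix (Fin a) (Fin b) ℂ) : Matrix (Fin b) (Fin a) ℂ :=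
  Mᴴ * (M * Mᴴ)⁻¹

/-- Rectangular diagonal matrix with entries `σ (off), σ (off+1), …` on the diagonal. -/
noncomputable def diagRect (σ : ℕ → ℝ) (off a b : ℕ) : Matrix (Fin a) (Fin b) ℂ :=
  Matrix.of fun i j => if (i : ℕ) = (j : ℕ) then (σ (off + (i : ℕ)) : ℂ) else 0

/-- The first `b` columns of a matrix with `b + c` columns. -/
def colsL {a b c : ℕ} (M : Matrix (Fin a) (Fin (b + c)) ℂ) : Matrix (Fin a) (Fin b) ℂ :=
  M.submatrix id (Fin.castAdd c)

/-- The last `c` columns of a matrix with `b + c` columns. -/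
def colsR {a b c : ℕ} (M : Matrix (Fin a) (Fin (b + c)) ℂ) : Matrix (Fin a) (Fin c) ℂ :=
  M.submatrix id (Fin.natAdd b)

section Norms

open scoped Matrix.Norms.L2Operator

/-- Singular values as decreasingly reindexed square roots of the eigenvalues of `Mᴴ * M`. -/
lemma exists_perm_sval {m n : ℕ} (M : Matrix (Fin m) (Fin n) ℂ) :
    ∃ e : Fin n ≃ Fin n,
      Antitone ((isHermitian_conjTranspose_mul_self M).eigenvalues ∘ e) ∧
      ∀ i : Fin n, sval M i =
        Real.sqrt ((isHermitian_conjTranspose_mul_self M).eigenvalues (e i)) := by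
  set ev := (isHermitian_conjTranspose_mul_self M).eigenvalues with hev
  let e : Fin n ≃ Fin n := (finCongr (Fintype.card_fin n).symm).trans
    (Fintype.equivOfCardEq (Fintype.card_fin _))
  have hanti : Antitone (ev ∘ e) := by
    intro a b hab
    simp only [hev, IsHermitian.eigenvalues, e, Function.comp_apply, Equiv.trans_apply,
      Equiv.symm_apply_apply]
    exact (isHermitian_conjTranspose_mul_self M).eigenvalues₀_antitone (by simpa using hab)
  refine ⟨e, hanti, fun i => ?_⟩
  have hl : List.insertionSort (· ≥ ·) ((List.ofFn ev).map Real.sqrt) =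
      List.ofFn (Real.sqrt ∘ ev ∘ e) := by
    refine List.Perm.eq_of_pairwise' (r := (· ≥ ·)) (List.pairwise_insertionSort _ _) ?_ ?_
    · rw [List.pairwise_ofFn]
      intro a b hab
      exact Real.sqrt_le_sqrt (hanti hab.le)
    · refine (List.perm_insertionSort _ _).trans ?_
      rw [List.map_ofFn]
      exact (Equiv.Perm.ofFn_comp_perm e (Real.sqrt ∘ ev)).symm
  rw [sval, hl]
  simp [List.getD_eq_getElem?_getD]

/-- In an eigenvector basis of `Mᴴ * M`, the quadratic form `‖M x‖ ^ 2` is diagonal. -/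
lemma norm_sq_mul_eigenvectorUnitary {m n : ℕ} (M : Matrix (Fin m) (Fin n) ℂ) (y : Fin n → ℂ) :
    ‖WithLp.toLp 2 ((M * (isHermitian_conjTranspose_mul_self M).eigenvectorUnitary.val) *ᵥ y)‖ ^ 2 =
      ∑ t, (isHermitian_conjTranspose_mul_self M).eigenvalues t * ‖y t‖ ^ 2 := by
  set H := isHermitian_conjTranspose_mul_self M
  set W : Matrix (Fin n) (Fin n) ℂ := H.eigenvectorUnitary.val
  have hW : Wᴴ * W = 1 := Unitary.coe_star_mul_self H.eigenvectorUnitary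
  have hspec : (M * W)ᴴ * (M * W) = diagonal (RCLike.ofReal ∘ H.eigenvalues) := by
    have h := H.spectral_theorem
    rw [Unitary.conjStarAlgAut_apply] at h
    change Mᴴ * M = W * diagonal (RCLike.ofReal ∘ H.eigenvalues) * Wᴴ at h
    calc (M * W)ᴴ * (M * W) = Wᴴ * (Mᴴ * M) * W := by
          simp only [conjTranspose_mul, Matrix.mul_assoc]
      _ = (Wᴴ * W) * diagonal (RCLike.ofReal ∘ H.eigenvalues) * (Wᴴ * W) := by
          rw [congrArg (Wᴴ * · * W) h]; simp only [Matrix.mul_assoc]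
      _ = _ := by rw [hW]; simp
  have key : star ((M * W) *ᵥ y) ⬝ᵥ ((M * W) *ᵥ y) =
      star y ⬝ᵥ (diagonal (RCLike.ofReal ∘ H.eigenvalues) *ᵥ y) := by
    rw [← hspec, star_mulVec, dotProduct_mulVec, vecMul_vecMul, dotProduct_mulVec]
  have key' := congrArg Complex.re key
  rw [EuclideanSpace.norm_sq_eq]
  simp only [dotProduct, Complex.re_sum, mulVec_diagonal] at key'
  convert key' using 2 with t _ t _
  · simp [← Complex.normSq_eq_norm_sq, Complex.normSq_apply]
  · simp [← Complex.normSq_eq_norm_sq, Complex.normSq_apply]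
    ring

lemma norm_toLp_mulVec_le {m n : ℕ} (M : Matrix (Fin m) (Fin n) ℂ) (x : Fin n → ℂ) :
    ‖WithLp.toLp 2 (M *ᵥ x)‖ ≤ ‖M‖ * ‖WithLp.toLp 2 x‖ :=
  l2_opNorm_mulVec M (WithLp.toLp 2 x)

lemma norm_le_one_of_conjTranspose_mul_self {m n : ℕ} {M : Matrix (Fin m) (Fin n) ℂ}
    (h : Mᴴ * M = 1) : ‖M‖ ≤ 1 := by
  have h1 := l2_opNorm_conjTranspose_mul_self M
  have h2 : ‖(1 : Matrix (Fin n) (Fin n) ℂ)‖ ≤ 1 := by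
    rw [← diagonal_one, l2_opNorm_diagonal]
    exact (pi_norm_le_iff_of_nonneg zero_le_one).2 fun i => by simp
  rw [h] at h1
  nlinarith [norm_nonneg M]

/-- Half of the Courant–Fischer principle: a bound for `M` on a subspace cut out by `i` linear
equations bounds the `i`-th singular value (counted from `0`). -/
lemma sval_le_of_ker {m n : ℕ} (M : Matrix (Fin m) (Fin n) ℂ) {i : ℕ} (hi : i < n) {c : ℝ}
    (hc : 0 ≤ c) (L : (Fin n → ℂ) →ₗ[ℂ] (Fin i → ℂ))
    (h : ∀ x, L x = 0 → ‖WithLp.toLp 2 (M *ᵥ x)‖ ≤ c * ‖WithLp.toLp 2 x‖) :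
    sval M i ≤ c := by
  obtain ⟨e, hanti, hs⟩ := exists_perm_sval M
  set H := isHermitian_conjTranspose_mul_self M
  set W : Matrix (Fin n) (Fin n) ℂ := H.eigenvectorUnitary.val with hWdef
  have hW : Wᴴ * W = 1 := Unitary.coe_star_mul_self H.eigenvectorUnitary
  let F : (Fin n → ℂ) →ₗ[ℂ] (Fin i → ℂ) × (Fin (n - 1 - i) → ℂ) :=
    (L ∘ₗ W.mulVecLin).prod
      (LinearMap.funLeft ℂ ℂ fun t : Fin (n - 1 - i) => e ⟨i + 1 + t, by omega⟩)
  obtain ⟨y, hyF, hy0⟩ := (LinearMap.ker F).exists_mem_ne_zero_of_ne_bot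
    (F.ker_ne_bot_of_finrank_lt (by simp; omega))
  have hL : L (W *ᵥ y) = 0 := congrArg Prod.fst (LinearMap.mem_ker.1 hyF)
  have hy : ∀ t : Fin n, i < t → y (e t) = 0 := by
    intro t ht
    have := congrFun (congrArg Prod.snd (LinearMap.mem_ker.1 hyF)) ⟨t - (i + 1), by omega⟩
    have ht' : (⟨i + 1 + (t - (i + 1)), by omega⟩ : Fin n) = t := Fin.ext (by simp; omega)
    simpa [F, LinearMap.funLeft_apply, ht'] using this
  have hlow : H.eigenvalues (e ⟨i, hi⟩) * ‖WithLp.toLp 2 y‖ ^ 2 ≤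
      ‖WithLp.toLp 2 (M *ᵥ (W *ᵥ y))‖ ^ 2 := by
    rw [mulVec_mulVec, norm_sq_mul_eigenvectorUnitary, EuclideanSpace.norm_sq_eq, Finset.mul_sum,
      ← Equiv.sum_comp e, ← Equiv.sum_comp e (fun t => H.eigenvalues t * ‖y t‖ ^ 2)]
    refine Finset.sum_le_sum fun t _ => ?_
    by_cases ht : i < t
    · simp [hy t ht]
    · exact mul_le_mul_of_nonneg_right (hanti (Fin.le_def.2 (not_lt.1 ht))) (by positivity)
  have hup : ‖WithLp.toLp 2 (M *ᵥ (W *ᵥ y))‖ ≤ c * ‖WithLp.toLp 2 y‖ := by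
    refine (h _ hL).trans (mul_le_mul_of_nonneg_left ?_ hc)
    refine (norm_toLp_mulVec_le W y).trans ?_
    exact mul_le_of_le_one_left (norm_nonneg _) (norm_le_one_of_conjTranspose_mul_self hW)
  have hypos : 0 < ‖WithLp.toLp 2 y‖ := norm_pos_iff.2 (by simpa using hy0)
  rw [show sval M i = _ from hs ⟨i, hi⟩]
  refine Real.sqrt_le_iff.2 ⟨hc, ?_⟩
  have : H.eigenvalues (e ⟨i, hi⟩) * ‖WithLp.toLp 2 y‖ ^ 2 ≤ c ^ 2 * ‖WithLp.toLp 2 y‖ ^ 2 := by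
    rw [← mul_pow]
    exact hlow.trans (pow_le_pow_left₀ (norm_nonneg _) hup 2)
  exact le_of_mul_le_mul_right this (by positivity)

open scoped ComplexOrder in
/-- The largest singular value bounds the spectral norm. -/
lemma norm_le_sval_zero {m n : ℕ} (hn : 0 < n) (M : Matrix (Fin m) (Fin n) ℂ) :
    ‖M‖ ≤ sval M 0 := by
  obtain ⟨e, hanti, hs⟩ := exists_perm_sval M
  set H := isHermitian_conjTranspose_mul_self M
  have hs0 : sval M 0 = _ := hs ⟨0, hn⟩
  have hnn : ∀ t, 0 ≤ H.eigenvalues t := (posSemidef_conjTranspose_mul_self M).eigenvalues_nonneg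
  have hsq : ‖M‖ * ‖M‖ ≤ sval M 0 * sval M 0 := by
    rw [hs0, Real.mul_self_sqrt (hnn _), ← l2_opNorm_conjTranspose_mul_self]
    have hspec := H.spectral_theorem
    rw [Unitary.conjStarAlgAut_apply] at hspec
    have hW := norm_le_one_of_conjTranspose_mul_self
      (Unitary.coe_star_mul_self H.eigenvectorUnitary)
    have hW' : ‖(star H.eigenvectorUnitary : Matrix (Fin n) (Fin n) ℂ)‖ ≤ 1 := by
      rw [star_eq_conjTranspose, l2_opNorm_conjTranspose]; exact hW
    have hD : ‖diagonal ((RCLike.ofReal : ℝ → ℂ) ∘ H.eigenvalues)‖ ≤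
        H.eigenvalues (e ⟨0, hn⟩) := by
      rw [l2_opNorm_diagonal]
      refine (pi_norm_le_iff_of_nonneg (hnn _)).2 fun t => ?_
      have h1 := hanti (show (⟨0, hn⟩ : Fin n) ≤ e.symm t from Fin.le_def.2 (Nat.zero_le _))
      simpa [abs_of_nonneg (hnn t)] using h1
    calc ‖Mᴴ * M‖ = _ := congrArg norm hspec
      _ ≤ _ * _ := l2_opNorm_mul _ _
      _ ≤ (_ * _) * _ := mul_le_mul_of_nonneg_right (l2_opNorm_mul _ _) (norm_nonneg _)
      _ ≤ (1 * H.eigenvalues (e ⟨0, hn⟩)) * 1 := by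
          have := hnn (e ⟨0, hn⟩)
          gcongr
      _ = _ := by ring
  exact (mul_self_le_mul_self_iff (norm_nonneg _) (hs0 ▸ Real.sqrt_nonneg _)).2 hsq

lemma matrix_norm_mul_le {l m n : ℕ} {M : Matrix (Fin l) (Fin m) ℂ} {N : Matrix (Fin m) (Fin n) ℂ}
    {a b : ℝ} (hM : ‖M‖ ≤ a) (hN : ‖N‖ ≤ b) : ‖M * N‖ ≤ a * b :=
  (l2_opNorm_mul M N).trans
    (mul_le_mul hM hN (norm_nonneg _) ((norm_nonneg _).trans hM))

lemma norm_le_one_of_isHermitian_of_mul_self {n : ℕ} {P : Matrix (Fin n) (Fin n) ℂ}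
    (hP : Pᴴ = P) (hPP : P * P = P) : ‖P‖ ≤ 1 := by
  have h := l2_opNorm_conjTranspose_mul_self P
  rw [hP, hPP] at h
  by_contra hlt
  nlinarith

lemma conjTranspose_one_sub {n : ℕ} {P : Matrix (Fin n) (Fin n) ℂ} (hP : Pᴴ = P) :
    (1 - P)ᴴ = 1 - P := by simp [hP]

lemma one_sub_mul_one_sub {n : ℕ} {P : Matrix (Fin n) (Fin n) ℂ} (hPP : P * P = P) :
    (1 - P) * (1 - P) = 1 - P := by
  simp [Matrix.mul_sub, Matrix.sub_mul, hPP]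

/-- A row block `[M₁ M₂]` in orthonormal coordinates has squared norm at most the sum of the
squared norms of the blocks. -/
lemma norm_add_mul_conjTranspose_sq_le {a n k l : ℕ}
    {V₁ : Matrix (Fin n) (Fin k) ℂ} {V₂ : Matrix (Fin n) (Fin l) ℂ}
    (h₁ : V₁ᴴ * V₁ = 1) (h₂ : V₂ᴴ * V₂ = 1) (h₁₂ : V₁ᴴ * V₂ = 0)
    (M₁ : Matrix (Fin a) (Fin k) ℂ) (M₂ : Matrix (Fin a) (Fin l) ℂ) :
    ‖M₁ * V₁ᴴ + M₂ * V₂ᴴ‖ ^ 2 ≤ ‖M₁‖ ^ 2 + ‖M₂‖ ^ 2 := by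
  have h₂₁ : V₂ᴴ * V₁ = 0 := by simpa using congrArg conjTranspose h₁₂
  have e : (M₁ * V₁ᴴ + M₂ * V₂ᴴ)ᴴᴴ * (M₁ * V₁ᴴ + M₂ * V₂ᴴ)ᴴ = M₁ * M₁ᴴ + M₂ * M₂ᴴ := by
    simp only [conjTranspose_add, conjTranspose_mul, conjTranspose_conjTranspose, Matrix.add_mul,
      Matrix.mul_add]
    have r (x y z w : ℕ) (M : Matrix (Fin x) (Fin y) ℂ) (B : Matrix (Fin y) (Fin n) ℂ)
        (C : Matrix (Fin n) (Fin z) ℂ) (N : Matrix (Fin z) (Fin w) ℂ) :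
        M * B * (C * N) = M * (B * C) * N := by simp only [Matrix.mul_assoc]
    simp [r, h₁, h₂, h₁₂, h₂₁]
  rw [sq, ← l2_opNorm_conjTranspose, ← l2_opNorm_conjTranspose_mul_self, e]
  refine (norm_add_le _ _).trans (add_le_add ?_ ?_) <;>
  · rw [sq]
    refine matrix_norm_mul_le le_rfl ?_
    rw [l2_opNorm_conjTranspose]

/-- The scalar inequality behind the large-perturbation regime. -/
lemma one_add_two_mul_le {γ f : ℝ} (hγ0 : 0 < γ) (hγ1 : γ < 1) (hf0 : 0 ≤ f)
    (hf : 1 - γ ^ 2 ≤ f ^ 2) : (1 + 2 * f) * (γ * (1 - γ)) ≤ f := by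
  have hp : γ * (1 - γ) ≤ 1 / 4 := by nlinarith [sq_nonneg (2 * γ - 1)]
  have hf2 : 2 * (γ * (1 - γ)) ≤ f := by
    refine abs_le_of_sq_le_sq' ?_ hf0 |>.2
    have h1 : 4 * γ ^ 2 * (1 - γ) ≤ 1 + γ := by
      nlinarith [mul_nonneg hγ0.le (sq_nonneg (2 * γ - 1)), mul_pos hγ0 hγ0]
    nlinarith [mul_le_mul_of_nonneg_right h1 (sub_nonneg.2 hγ1.le)]
  nlinarith

set_option maxHeartbeats 1000000 in
/-- Perturbation bound for the leading singular subspaces of `A = U₁ D V₁ᴴ + U₂ S V₂ᴴ` under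
projection of `A` by `P`. The projections `E` and `G` are onto the leading singular subspaces of
`P * A`, with remainder `N`. -/
lemma norm_residual_le {k m n a b : ℕ}
    {A : Matrix (Fin m) (Fin n) ℂ} {U₁ : Matrix (Fin m) (Fin k) ℂ} {U₂ : Matrix (Fin m) (Fin a) ℂ}
    {V₁ : Matrix (Fin n) (Fin k) ℂ} {V₂ : Matrix (Fin n) (Fin b) ℂ}
    {D D' : Matrix (Fin k) (Fin k) ℂ} {S : Matrix (Fin a) (Fin b) ℂ}
    (hA : A = U₁ * D * V₁ᴴ + U₂ * S * V₂ᴴ)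
    (hU₁ : U₁ᴴ * U₁ = 1) (hU₂ : U₂ᴴ * U₂ = 1) (hU₁₂ : U₁ᴴ * U₂ = 0)
    (hV₁ : V₁ᴴ * V₁ = 1) (hV₂ : V₂ᴴ * V₂ = 1) (hV₁₂ : V₁ᴴ * V₂ = 0)
    (hD : Dᴴ = D) (hDD' : D * D' = 1)
    {s d g : ℝ} (hd : 0 < d) (hs0 : 0 ≤ s) (hsd : s < d) (hg : 0 ≤ g)
    (hD' : ‖D'‖ ≤ d⁻¹) (hS : ‖S‖ ≤ s)
    {P E : Matrix (Fin m) (Fin m) ℂ} {G : Matrix (Fin n) (Fin n) ℂ}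
    (hP : Pᴴ = P) (hPP : P * P = P) (hE : Eᴴ = E) (hEE : E * E = E) (hG : Gᴴ = G) (hGG : G * G = G)
    {H : Matrix (Fin a) (Fin k) ℂ} (hH : ‖H‖ ≤ s * g) (hPH : (1 - P) * (U₁ * D + U₂ * H) = 0)
    {N : Matrix (Fin m) (Fin n) ℂ} (hN : ‖N‖ ≤ s)
    (hNE : (1 - E) * (P * A) = N) (hNG : P * A * (1 - G) = N) :
    ‖(1 - E) * U₁ * D‖ ≤ s * (g / (1 - s / d)) ∧ ‖(1 - G) * V₁ * D‖ ≤ s * (g / (1 - s / d)) := by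
  have hP1 : ‖1 - P‖ ≤ 1 :=
    norm_le_one_of_isHermitian_of_mul_self (conjTranspose_one_sub hP) (one_sub_mul_one_sub hPP)
  have hE1 : ‖1 - E‖ ≤ 1 :=
    norm_le_one_of_isHermitian_of_mul_self (conjTranspose_one_sub hE) (one_sub_mul_one_sub hEE)
  have hG1 : ‖1 - G‖ ≤ 1 :=
    norm_le_one_of_isHermitian_of_mul_self (conjTranspose_one_sub hG) (one_sub_mul_one_sub hGG)
  have nU₁ := norm_le_one_of_conjTranspose_mul_self hU₁
  have nU₂ := norm_le_one_of_conjTranspose_mul_self hU₂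
  have nV₁ := norm_le_one_of_conjTranspose_mul_self hV₁
  have nV₂ := norm_le_one_of_conjTranspose_mul_self hV₂
  have hU₂₁ : U₂ᴴ * U₁ = 0 := by simpa using congrArg conjTranspose hU₁₂
  have hV₂₁ : V₂ᴴ * V₁ = 0 := by simpa using congrArg conjTranspose hV₁₂
  have nNt : ‖Nᴴ‖ ≤ s := by rwa [l2_opNorm_conjTranspose]
  have nSt : ‖Sᴴ‖ ≤ s := by rwa [l2_opNorm_conjTranspose]
  set X := (1 - E) * U₁ with hX
  set T := (1 - G) * V₁ with hT
  set γ := s / d with hγ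
  set f := γ * g with hf
  have hγ0 : 0 ≤ γ := by positivity
  have hγ1 : γ < 1 := (div_lt_one hd).2 hsd
  have hf0 : 0 ≤ f := by positivity
  have hAV : A * V₁ = U₁ * D := by
    rw [hA, Matrix.add_mul, Matrix.mul_assoc _ V₁ᴴ, Matrix.mul_assoc _ V₂ᴴ, hV₁, hV₂₁]
    simp
  have hAt : Aᴴ = V₁ * D * U₁ᴴ + V₂ * Sᴴ * U₂ᴴ := by
    rw [hA]
    simp only [conjTranspose_add, conjTranspose_mul, conjTranspose_conjTranspose, hD,
      Matrix.mul_assoc]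
  have hAU₁ : Aᴴ * U₁ = V₁ * D := by
    rw [hAt, Matrix.add_mul, Matrix.mul_assoc _ U₁ᴴ, Matrix.mul_assoc _ U₂ᴴ, hU₁, hU₂₁]
    simp
  have hAU₂ : Aᴴ * U₂ = V₂ * Sᴴ := by
    rw [hAt, Matrix.add_mul, Matrix.mul_assoc _ U₁ᴴ, Matrix.mul_assoc _ U₂ᴴ, hU₂, hU₁₂]
    simp
  have hPU : (1 - P) * (U₁ * D) = -((1 - P) * U₂ * H) := by
    rw [Matrix.mul_add, ← Matrix.mul_assoc _ U₂] at hPH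
    exact eq_neg_of_add_eq_zero_left hPH
  have nF : ‖H * D'‖ ≤ f := by
    refine (matrix_norm_mul_le hH hD').trans_eq ?_
    rw [hf, hγ]; ring
  have hPU' : (1 - P) * U₁ = -((1 - P) * U₂ * (H * D')) := by
    have := congrArg (· * D') hPU
    simpa [Matrix.mul_assoc, hDD'] using this
  have nPU : ‖(1 - P) * U₁‖ ≤ f := by
    rw [hPU', norm_neg]
    simpa using matrix_norm_mul_le (matrix_norm_mul_le hP1 nU₂) nF
  have nPUD : ‖(1 - P) * (U₁ * D)‖ ≤ s * g := by
    rw [hPU, norm_neg]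
    simpa using matrix_norm_mul_le (matrix_norm_mul_le hP1 nU₂) hH
  have hNT : N * V₁ = N * T := by
    rw [hT, ← Matrix.mul_assoc, ← hNG, Matrix.mul_assoc _ (1 - G) (1 - G), one_sub_mul_one_sub hGG]
  have hNX : Nᴴ * U₁ = Nᴴ * X := by
    rw [hX, ← Matrix.mul_assoc, ← hNE, conjTranspose_mul (1 - E), conjTranspose_one_sub hE,
      Matrix.mul_assoc _ (1 - E) (1 - E), one_sub_mul_one_sub hEE]
  have hNt : Nᴴ = (1 - G) * (Aᴴ * P) := by
    rw [← hNG, conjTranspose_mul, conjTranspose_mul, hP, conjTranspose_one_sub hG]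
  have eX : X * D = N * T + (1 - E) * ((1 - P) * (U₁ * D)) := by
    rw [← hNT, ← hNE, hX, Matrix.mul_assoc (1 - E), Matrix.mul_assoc (1 - E), Matrix.mul_assoc P,
      hAV, ← Matrix.mul_add, ← Matrix.add_mul]
    simp
  have eT : T * D = Nᴴ * X + (1 - G) * (Aᴴ * (1 - P) * ((1 - P) * U₁)) := by
    rw [← hNX, hNt, Matrix.mul_assoc Aᴴ, ← Matrix.mul_assoc (1 - P), one_sub_mul_one_sub hPP,
      hT, Matrix.mul_assoc (1 - G), Matrix.mul_assoc (1 - G), Matrix.mul_assoc Aᴴ, ← hAU₁,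
      ← Matrix.mul_add, ← Matrix.mul_add, ← Matrix.add_mul]
    simp
  have nXD : ‖X * D‖ ≤ s * ‖T‖ + s * g := by
    rw [eX]
    refine (norm_add_le _ _).trans (add_le_add (matrix_norm_mul_le hN le_rfl) ?_)
    simpa using matrix_norm_mul_le hE1 nPUD
  have nPA : ‖(1 - P) * A‖ ^ 2 ≤ s ^ 2 * (1 + g ^ 2) := by
    have e : (1 - P) * A = (1 - P) * U₂ * (-H * V₁ᴴ + S * V₂ᴴ) := by
      rw [hA, Matrix.mul_add, ← Matrix.mul_assoc (1 - P), hPU, Matrix.mul_add]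
      simp [Matrix.mul_assoc]
    have h1 := norm_add_mul_conjTranspose_sq_le hV₁ hV₂ hV₁₂ (-H) S
    have h2 := matrix_norm_mul_le (matrix_norm_mul_le hP1 nU₂)
      (le_refl ‖-H * V₁ᴴ + S * V₂ᴴ‖)
    rw [← e, one_mul, one_mul] at h2
    rw [norm_neg] at h1
    have h3 : ‖H‖ ^ 2 ≤ (s * g) ^ 2 := pow_le_pow_left₀ (norm_nonneg _) hH 2
    have h4 : ‖S‖ ^ 2 ≤ s ^ 2 := pow_le_pow_left₀ (norm_nonneg _) hS 2
    have h5 := pow_le_pow_left₀ (norm_nonneg _) h2 2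
    nlinarith
  have nX : ‖X‖ ≤ 1 := by simpa using matrix_norm_mul_le hE1 nU₁
  have nT : ‖T‖ ≤ 1 := by simpa using matrix_norm_mul_le hG1 nV₁
  have h1γ : 0 < 1 - γ := sub_pos.2 hγ1
  have hsum : s * (f / (1 - γ)) + s * g = s * (g / (1 - γ)) := by
    rw [hf]; field_simp; ring
  have div_bound {l : ℕ} (M : Matrix (Fin l) (Fin k) ℂ) : ‖M‖ ≤ ‖M * D‖ * d⁻¹ := by
    have := matrix_norm_mul_le (le_refl ‖M * D‖) hD'
    rwa [Matrix.mul_assoc, hDD', Matrix.mul_one] at this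
  by_cases hcase : γ ^ 2 * (1 + g ^ 2) ≤ 1
  · have nTD : ‖T * D‖ ≤ s * ‖X‖ + s * g := by
      have h1 : ‖Aᴴ * (1 - P)‖ = ‖(1 - P) * A‖ := by
        rw [← l2_opNorm_conjTranspose, conjTranspose_mul, conjTranspose_one_sub hP,
          conjTranspose_conjTranspose]
      have h2 : ‖(1 - P) * A‖ * γ ≤ s := by
        refine abs_le_of_sq_le_sq' ?_ hs0 |>.2
        nlinarith [mul_le_mul_of_nonneg_left hcase (sq_nonneg s),
          mul_le_mul_of_nonneg_right nPA (sq_nonneg γ)]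
      rw [eT]
      refine (norm_add_le _ _).trans (add_le_add (matrix_norm_mul_le nNt le_rfl) ?_)
      have h3 := matrix_norm_mul_le hG1 (matrix_norm_mul_le h1.le nPU)
      rw [one_mul, hf, ← mul_assoc] at h3
      exact h3.trans (mul_le_mul_of_nonneg_right h2 hg)
    have hx : ‖X‖ ≤ γ * ‖T‖ + f := by
      refine (div_bound X).trans ((mul_le_mul_of_nonneg_right nXD (by positivity)).trans_eq ?_)
      rw [hf, hγ]; ring
    have ht : ‖T‖ ≤ γ * ‖X‖ + f := by
      refine (div_bound T).trans ((mul_le_mul_of_nonneg_right nTD (by positivity)).trans_eq ?_)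
      rw [hf, hγ]; ring
    have hx' : ‖X‖ ≤ f / (1 - γ) := by
      rw [le_div_iff₀ h1γ]; nlinarith
    have ht' : ‖T‖ ≤ f / (1 - γ) := by
      rw [le_div_iff₀ h1γ]; nlinarith
    rw [← hsum]
    exact ⟨nXD.trans (by gcongr), nTD.trans (by gcongr)⟩
  · push Not at hcase
    have hγpos : 0 < γ := hγ0.lt_of_ne fun h => by norm_num [← h] at hcase
    have hf2 : 1 - γ ^ 2 ≤ f ^ 2 := by rw [hf]; nlinarith
    have hone : 1 ≤ f / (1 - γ) := by
      rw [le_div_iff₀ h1γ, one_mul]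
      refine abs_le_of_sq_le_sq' ?_ hf0 |>.2
      nlinarith
    refine ⟨?_, ?_⟩
    · rw [← hsum]
      have := nT.trans hone
      exact nXD.trans (by gcongr)
    · have e : T * D = Nᴴ * (U₁ + U₂ * (H * D')) - (1 - G) * (V₂ * (Sᴴ * (H * D'))) := by
        have hZ : P * (U₁ + U₂ * (H * D')) = U₁ + U₂ * (H * D') := by
          have : (1 - P) * (U₁ + U₂ * (H * D')) = 0 := by
            rw [Matrix.mul_add, hPU']; simp [Matrix.mul_assoc]
          rw [Matrix.sub_mul, Matrix.one_mul, sub_eq_zero] at this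
          exact this.symm
        rw [hNt, Matrix.mul_assoc (1 - G) (Aᴴ * P), Matrix.mul_assoc Aᴴ P, hZ, Matrix.mul_add, hAU₁,
          ← Matrix.mul_assoc Aᴴ, hAU₂, hT, Matrix.mul_add]
        simp [Matrix.mul_assoc]
      have n1 : ‖U₁ + U₂ * (H * D')‖ ≤ 1 + f :=
        (norm_add_le _ _).trans (add_le_add nU₁ (by simpa using matrix_norm_mul_le nU₂ nF))
      have n2 : ‖T * D‖ ≤ s * (1 + f) + s * f := by
        rw [e]
        refine (norm_sub_le _ _).trans (add_le_add (matrix_norm_mul_le nNt n1) ?_)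
        simpa using matrix_norm_mul_le hG1 (matrix_norm_mul_le nV₂ (matrix_norm_mul_le nSt nF))
      have h3 := one_add_two_mul_le hγpos hγ1 hf0 hf2
      have h4 : 1 + 2 * f ≤ g / (1 - γ) := by
        rw [le_div_iff₀ h1γ]
        refine le_of_mul_le_mul_left ?_ hγpos
        rw [← hf]; linarith
      calc ‖T * D‖ ≤ s * (1 + 2 * f) := by linarith
        _ ≤ _ := by gcongr

lemma mul_diagRect_mul_conjTranspose {a b c d k : ℕ} (σ : ℕ → ℝ)
    (M : Matrix (Fin a) (Fin (k + b)) ℂ) (N : Matrix (Fin c) (Fin (k + d)) ℂ) :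
    M * diagRect σ 0 (k + b) (k + d) * Nᴴ =
      colsL M * diagRect σ 0 k k * (colsL N)ᴴ + colsR M * diagRect σ k b d * (colsR N)ᴴ := by
  ext i j
  have h1 (x : Fin k) (y : Fin d) : (x : ℕ) ≠ k + y := by omega
  have h2 (x : Fin b) (y : Fin k) : k + (x : ℕ) ≠ y := by omega
  simp [Matrix.mul_apply, Fin.sum_univ_add, diagRect, colsL, colsR, h1, h2]

lemma colsL_conjTranspose_mul_colsL {a b c : ℕ} {M : Matrix (Fin a) (Fin (b + c)) ℂ}
    (h : Mᴴ * M = 1) : (colsL M)ᴴ * colsL M = 1 := by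
  ext i j
  simpa [Matrix.mul_apply, colsL, Matrix.one_apply] using
    congrFun (congrFun h (Fin.castAdd c i)) (Fin.castAdd c j)

lemma colsR_conjTranspose_mul_colsR {a b c : ℕ} {M : Matrix (Fin a) (Fin (b + c)) ℂ}
    (h : Mᴴ * M = 1) : (colsR M)ᴴ * colsR M = 1 := by
  ext i j
  simpa [Matrix.mul_apply, colsR, Matrix.one_apply] using
    congrFun (congrFun h (Fin.natAdd b i)) (Fin.natAdd b j)

lemma colsL_conjTranspose_mul_colsR {a b c : ℕ} {M : Matrix (Fin a) (Fin (b + c)) ℂ}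
    (h : Mᴴ * M = 1) : (colsL M)ᴴ * colsR M = 0 := by
  ext i j
  have hij : Fin.castAdd c i ≠ Fin.natAdd b j := fun e => by
    have := congrArg Fin.val e
    simp at this
    omega
  simpa [Matrix.mul_apply, colsL, colsR, Matrix.one_apply, hij] using
    congrFun (congrFun h (Fin.castAdd c i)) (Fin.natAdd b j)

lemma norm_diagRect_le {σ : ℕ → ℝ} {off a b : ℕ} {c : ℝ} (hc : 0 ≤ c)
    (h : ∀ i < a, |σ (off + i)| ≤ c) : ‖diagRect σ off a b‖ ≤ c := by
  have e : (diagRect σ off a b)ᴴ * diagRect σ off a b =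
      diagonal fun j : Fin b => if (j : ℕ) < a then ((σ (off + j) : ℂ)) ^ 2 else 0 := by
    ext i j
    simp only [Matrix.mul_apply, diagRect, conjTranspose_apply, of_apply, diagonal_apply]
    by_cases hi : (i : ℕ) < a
    · rw [Finset.sum_eq_single ⟨i, hi⟩]
      · by_cases hij : i = j
        · subst hij; simp [hi, sq]
        · have : (i : ℕ) ≠ j := fun h => hij (Fin.ext h)
          simp [hij, this]
      · intro x _ hx
        have : (x : ℕ) ≠ i := fun h => hx (Fin.ext h)
        simp [this]
      · simp
    · rw [Finset.sum_eq_zero]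
      · simp [hi]
      · intro x _
        have : (x : ℕ) ≠ i := fun h => hi (h ▸ x.2)
        simp [this]
  have hsq : ‖diagRect σ off a b‖ * ‖diagRect σ off a b‖ ≤ c * c := by
    rw [← l2_opNorm_conjTranspose_mul_self, e, l2_opNorm_diagonal]
    refine (pi_norm_le_iff_of_nonneg (by positivity)).2 fun j => ?_
    split_ifs with hj
    · rw [norm_pow, Complex.norm_real, Real.norm_eq_abs, ← sq]
      exact pow_le_pow_left₀ (abs_nonneg _) (h _ hj) 2
    · simpa using mul_nonneg hc hc
  exact (mul_self_le_mul_self_iff (norm_nonneg _) hc).2 hsq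

lemma diagRect_zero_self (σ : ℕ → ℝ) (k : ℕ) :
    diagRect σ 0 k k = diagonal fun i : Fin k => (σ i : ℂ) := by
  ext i j
  simp [diagRect, diagonal_apply, Fin.ext_iff]

lemma diagRect_conjTranspose (σ : ℕ → ℝ) (k : ℕ) :
    (diagRect σ 0 k k)ᴴ = diagRect σ 0 k k := by
  simp only [diagRect_zero_self, diagonal_conjTranspose]
  congr 1
  ext i
  simp

lemma diagRect_mul_diagRect_inv {σ : ℕ → ℝ} {k : ℕ} (h : ∀ i < k, 0 < σ i) :
    diagRect σ 0 k k * diagRect (fun i => (σ i)⁻¹) 0 k k = 1 := by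
  simp only [diagRect_zero_self, diagonal_mul_diagonal, ← diagonal_one]
  congr 1
  ext i
  have : (σ i : ℂ) ≠ 0 := by exact_mod_cast (h i i.2).ne'
  simp [this]

/-- A bound on `M * Σ` yields bounds on the individual singular values of `M`. -/
lemma sval_le_of_norm_mul_diagRect {m k : ℕ} {σ : ℕ → ℝ} (hpos : ∀ i < k, 0 < σ i)
    (hanti : ∀ i j, i ≤ j → σ j ≤ σ i) {M : Matrix (Fin m) (Fin k) ℂ} {C : ℝ}
    (hM : ‖M * diagRect σ 0 k k‖ ≤ C) (j : Fin k) :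
    sval M (k - 1 - j) ≤ C / σ j := by
  have hC : 0 ≤ C := (norm_nonneg _).trans hM
  have hj := hpos j j.2
  let L : (Fin k → ℂ) →ₗ[ℂ] (Fin (k - 1 - j) → ℂ) :=
    LinearMap.funLeft ℂ ℂ fun t => ⟨j + 1 + t, by omega⟩
  refine sval_le_of_ker M (by omega) (by positivity) L fun x hx => ?_
  have hx0 : ∀ i : Fin k, j < i → x i = 0 := by
    intro i hi
    have hi' : (j : ℕ) < i := hi
    have := congrFun hx ⟨i - (j + 1), by omega⟩
    have hij : (⟨j + 1 + (i - (j + 1)), by omega⟩ : Fin k) = i := Fin.ext (by simp; omega)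
    simpa [L, LinearMap.funLeft_apply, hij] using this
  set y := diagRect (fun i => (σ i)⁻¹) 0 k k *ᵥ x with hy
  have hxy : M *ᵥ x = (M * diagRect σ 0 k k) *ᵥ y := by
    rw [hy, mulVec_mulVec, Matrix.mul_assoc, diagRect_mul_diagRect_inv hpos, Matrix.mul_one]
  have hyx : ‖WithLp.toLp 2 y‖ ≤ (σ j)⁻¹ * ‖WithLp.toLp 2 x‖ := by
    refine abs_le_of_sq_le_sq' ?_ (by positivity) |>.2
    rw [mul_pow, EuclideanSpace.norm_sq_eq, EuclideanSpace.norm_sq_eq, Finset.mul_sum]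
    refine Finset.sum_le_sum fun i _ => ?_
    simp only [hy, diagRect_zero_self, mulVec_diagonal, norm_mul, Complex.norm_real, mul_pow,
      Real.norm_eq_abs, sq_abs]
    by_cases hi : j < i
    · simp [hx0 i hi]
    · have h1 : (σ i)⁻¹ ≤ (σ j)⁻¹ := inv_anti₀ hj (hanti _ _ (not_lt.1 hi))
      have h2 : 0 ≤ (σ i)⁻¹ := (inv_pos.2 (hpos i i.2)).le
      gcongr
  rw [hxy]
  calc _ ≤ _ := norm_toLp_mulVec_le _ _
    _ ≤ C * ((σ j)⁻¹ * ‖WithLp.toLp 2 x‖) := by gcongr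
    _ = _ := by ring

/-- Compressing `A` from the left does not increase its `k`-th singular value. -/
lemma compressed_sval_le {k m n b d ρ : ℕ} {A : Matrix (Fin m) (Fin n) ℂ}
    {U₁ : Matrix (Fin m) (Fin k) ℂ} {U₂ : Matrix (Fin m) (Fin b) ℂ}
    {V₁ : Matrix (Fin n) (Fin k) ℂ} {V₂ : Matrix (Fin n) (Fin d) ℂ}
    {D : Matrix (Fin k) (Fin k) ℂ} {S : Matrix (Fin b) (Fin d) ℂ} {s : ℝ}
    (hA : A = U₁ * D * V₁ᴴ + U₂ * S * V₂ᴴ) (hU₂ : U₂ᴴ * U₂ = 1) (hV₂ : V₂ᴴ * V₂ = 1)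
    (hS : ‖S‖ ≤ s)
    {Q : Matrix (Fin m) (Fin (k + ρ)) ℂ} {UB : Matrix (Fin (k + ρ)) (Fin (k + ρ)) ℂ}
    {Vh : Matrix (Fin n) (Fin (k + ρ)) ℂ} {σh : ℕ → ℝ}
    (hQ : Qᴴ * Q = 1) (hUB : UBᴴ * UB = 1) (hVh : Vhᴴ * Vh = 1)
    (hσh0 : ∀ i, 0 ≤ σh i) (hσhm : ∀ i j, i ≤ j → σh j ≤ σh i)
    (hB : Qᴴ * A = UB * diagRect σh 0 (k + ρ) (k + ρ) * Vhᴴ) (hρ : 0 < ρ) :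
    σh k ≤ s := by
  let F : (Fin (k + ρ) → ℂ) →ₗ[ℂ] (Fin k → ℂ) × (Fin (ρ - 1) → ℂ) :=
    (V₁ᴴ * Vh).mulVecLin.prod (LinearMap.funLeft ℂ ℂ fun t => ⟨k + 1 + t, by omega⟩)
  obtain ⟨y, hyF, hy0⟩ := (LinearMap.ker F).exists_mem_ne_zero_of_ne_bot
    (F.ker_ne_bot_of_finrank_lt (by simp; omega))
  have hV : (V₁ᴴ * Vh) *ᵥ y = 0 := congrArg Prod.fst (LinearMap.mem_ker.1 hyF)
  have hy : ∀ i : Fin (k + ρ), k < i → y i = 0 := by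
    intro i hi
    have := congrFun (congrArg Prod.snd (LinearMap.mem_ker.1 hyF)) ⟨i - (k + 1), by omega⟩
    have hij : (⟨k + 1 + (i - (k + 1)), by omega⟩ : Fin (k + ρ)) = i := Fin.ext (by simp; omega)
    simpa [F, LinearMap.funLeft_apply, hij] using this
  have hypos : 0 < ‖WithLp.toLp 2 y‖ := norm_pos_iff.2 (by simpa using hy0)
  have hlow : σh k * ‖WithLp.toLp 2 y‖ ≤
      ‖WithLp.toLp 2 (diagRect σh 0 (k + ρ) (k + ρ) *ᵥ y)‖ := by
    refine abs_le_of_sq_le_sq' ?_ (norm_nonneg _) |>.2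
    rw [mul_pow, EuclideanSpace.norm_sq_eq, EuclideanSpace.norm_sq_eq, Finset.mul_sum]
    refine Finset.sum_le_sum fun i _ => ?_
    simp only [diagRect_zero_self, mulVec_diagonal, norm_mul, Complex.norm_real, mul_pow,
      Real.norm_eq_abs, sq_abs]
    by_cases hi : k < i
    · simp [hy i hi]
    · have h1 := hσhm _ _ (not_lt.1 hi)
      have h2 := hσh0 k
      gcongr
  have hDy : diagRect σh 0 (k + ρ) (k + ρ) *ᵥ y =
      (UBᴴ * Qᴴ * (U₂ * S * V₂ᴴ) * Vh) *ᵥ y := by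
    have h1 : UBᴴ * Qᴴ * A * Vh = diagRect σh 0 (k + ρ) (k + ρ) := by
      rw [Matrix.mul_assoc UBᴴ, hB, ← Matrix.mul_assoc, ← Matrix.mul_assoc, hUB, Matrix.one_mul,
        Matrix.mul_assoc, hVh, Matrix.mul_one]
    rw [← h1, hA, Matrix.mul_add, Matrix.add_mul, add_mulVec]
    have h2 : (UBᴴ * Qᴴ * (U₁ * D * V₁ᴴ) * Vh) *ᵥ y = 0 := by
      have : UBᴴ * Qᴴ * (U₁ * D * V₁ᴴ) * Vh = UBᴴ * Qᴴ * (U₁ * D) * (V₁ᴴ * Vh) := by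
        simp only [Matrix.mul_assoc]
      rw [this, ← mulVec_mulVec, hV, mulVec_zero]
    rw [h2, zero_add]
  have hup : ‖UBᴴ * Qᴴ * (U₂ * S * V₂ᴴ) * Vh‖ ≤ s := by
    have n1 : ‖UBᴴ‖ ≤ 1 := by
      rw [l2_opNorm_conjTranspose]; exact norm_le_one_of_conjTranspose_mul_self hUB
    have n2 : ‖Qᴴ‖ ≤ 1 := by
      rw [l2_opNorm_conjTranspose]; exact norm_le_one_of_conjTranspose_mul_self hQ
    have n3 : ‖V₂ᴴ‖ ≤ 1 := by
      rw [l2_opNorm_conjTranspose]; exact norm_le_one_of_conjTranspose_mul_self hV₂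
    simpa using matrix_norm_mul_le (matrix_norm_mul_le (matrix_norm_mul_le n1 n2)
      (matrix_norm_mul_le (matrix_norm_mul_le (norm_le_one_of_conjTranspose_mul_self hU₂) hS) n3))
      (norm_le_one_of_conjTranspose_mul_self hVh)
  have := (norm_toLp_mulVec_le (UBᴴ * Qᴴ * (U₂ * S * V₂ᴴ) * Vh) y).trans
    (mul_le_mul_of_nonneg_right hup (norm_nonneg _))
  rw [← hDy] at this
  exact le_of_mul_le_mul_right (hlow.trans this) hypos

lemma matrix_norm_pow_le {n : ℕ} {M : Matrix (Fin n) (Fin n) ℂ} {c : ℝ} (h : ‖M‖ ≤ c) (p : ℕ) :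
    ‖M ^ p‖ ≤ c ^ p := by
  induction p with
  | zero =>
    simpa using norm_le_one_of_conjTranspose_mul_self
      (M := (1 : Matrix (Fin n) (Fin n) ℂ)) (by simp)
  | succ p ih => rw [pow_succ, pow_succ]; exact matrix_norm_mul_le ih h

lemma pow_mul_of_mul_eq {n k : ℕ} {M : Matrix (Fin n) (Fin n) ℂ} {U : Matrix (Fin n) (Fin k) ℂ}
    {T : Matrix (Fin k) (Fin k) ℂ} (h : M * U = U * T) (p : ℕ) : M ^ p * U = U * T ^ p := by
  induction p with
  | zero => simp
  | succ p ih => rw [pow_succ, Matrix.mul_assoc, h, ← Matrix.mul_assoc, ih, Matrix.mul_assoc,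
      ← pow_succ]

/-- The sampled range after `q` power iterations, in the singular bases of `A`. -/
lemma power_iteration_eq {k m n b d r : ℕ} {A : Matrix (Fin m) (Fin n) ℂ}
    {U₁ : Matrix (Fin m) (Fin k) ℂ} {U₂ : Matrix (Fin m) (Fin b) ℂ}
    {V₁ : Matrix (Fin n) (Fin k) ℂ} {V₂ : Matrix (Fin n) (Fin d) ℂ}
    {D D' : Matrix (Fin k) (Fin k) ℂ} {S : Matrix (Fin b) (Fin d) ℂ}
    (hA : A = U₁ * D * V₁ᴴ + U₂ * S * V₂ᴴ)
    (hU₁ : U₁ᴴ * U₁ = 1) (hU₂ : U₂ᴴ * U₂ = 1) (hU₁₂ : U₁ᴴ * U₂ = 0)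
    (hV₁ : V₁ᴴ * V₁ = 1) (hV₂ : V₂ᴴ * V₂ = 1) (hV₁₂ : V₁ᴴ * V₂ = 0)
    (hD : Dᴴ = D) (hDD' : D * D' = 1) (q : ℕ)
    {Ω : Matrix (Fin n) (Fin r) ℂ} {K : Matrix (Fin r) (Fin k) ℂ} (hK : V₁ᴴ * Ω * K = 1) :
    (A * Aᴴ) ^ q * A * Ω * (K * D' ^ (2 * q)) =
      U₁ * D + U₂ * ((S * Sᴴ) ^ q * S * (V₂ᴴ * Ω * K) * D' ^ (2 * q)) := by
  have hV₂₁ : V₂ᴴ * V₁ = 0 := by simpa using congrArg conjTranspose hV₁₂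
  have hU₂₁ : U₂ᴴ * U₁ = 0 := by simpa using congrArg conjTranspose hU₁₂
  have hAt : Aᴴ = V₁ * D * U₁ᴴ + V₂ * Sᴴ * U₂ᴴ := by
    rw [hA]
    simp only [conjTranspose_add, conjTranspose_mul, conjTranspose_conjTranspose, hD,
      Matrix.mul_assoc]
  have hAU₁ : Aᴴ * U₁ = V₁ * D := by
    rw [hAt, Matrix.add_mul, Matrix.mul_assoc _ U₁ᴴ, Matrix.mul_assoc _ U₂ᴴ, hU₁, hU₂₁]
    simp
  have hAU₂ : Aᴴ * U₂ = V₂ * Sᴴ := by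
    rw [hAt, Matrix.add_mul, Matrix.mul_assoc _ U₁ᴴ, Matrix.mul_assoc _ U₂ᴴ, hU₂, hU₁₂]
    simp
  have hAV₁ : A * V₁ = U₁ * D := by
    rw [hA, Matrix.add_mul, Matrix.mul_assoc _ V₁ᴴ, Matrix.mul_assoc _ V₂ᴴ, hV₁, hV₂₁]
    simp
  have hAV₂ : A * V₂ = U₂ * S := by
    rw [hA, Matrix.add_mul, Matrix.mul_assoc _ V₁ᴴ, Matrix.mul_assoc _ V₂ᴴ, hV₂, hV₁₂]
    simp
  have h₁ : A * Aᴴ * U₁ = U₁ * D ^ 2 := by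
    rw [Matrix.mul_assoc, hAU₁, ← Matrix.mul_assoc, hAV₁, Matrix.mul_assoc, sq]
  have h₂ : A * Aᴴ * U₂ = U₂ * (S * Sᴴ) := by
    rw [Matrix.mul_assoc, hAU₂, ← Matrix.mul_assoc, hAV₂, Matrix.mul_assoc]
  have hq₁ := pow_mul_of_mul_eq h₁ q
  have hq₂ := pow_mul_of_mul_eq h₂ q
  have hD'D : Commute D D' := by
    rw [Commute, SemiconjBy, hDD', mul_eq_one_comm.1 hDD']
  have hDp : (D ^ 2) ^ q * D * D' ^ (2 * q) = D := by
    rw [← pow_mul, ← pow_succ, pow_succ', mul_assoc, ← hD'D.mul_pow, hDD', one_pow, mul_one]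
  have e₁ : (A * Aᴴ) ^ q * (U₁ * D * V₁ᴴ) * Ω * (K * D' ^ (2 * q)) = U₁ * D := by
    calc _ = ((A * Aᴴ) ^ q * U₁) * D * (V₁ᴴ * Ω * K) * D' ^ (2 * q) := by
          simp only [Matrix.mul_assoc]
      _ = U₁ * ((D ^ 2) ^ q * D * D' ^ (2 * q)) := by
          rw [hq₁, hK, Matrix.mul_one]; simp only [Matrix.mul_assoc]
      _ = _ := by rw [hDp]
  have e₂ : (A * Aᴴ) ^ q * (U₂ * S * V₂ᴴ) * Ω * (K * D' ^ (2 * q)) =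
      U₂ * ((S * Sᴴ) ^ q * S * (V₂ᴴ * Ω * K) * D' ^ (2 * q)) := by
    calc _ = ((A * Aᴴ) ^ q * U₂) * S * (V₂ᴴ * Ω * K) * D' ^ (2 * q) := by
          simp only [Matrix.mul_assoc]
      _ = _ := by rw [hq₂]; simp only [Matrix.mul_assoc]
  calc _ = (A * Aᴴ) ^ q * (U₁ * D * V₁ᴴ + U₂ * S * V₂ᴴ) * Ω * (K * D' ^ (2 * q)) := by
        rw [← hA]
    _ = _ := by rw [Matrix.mul_add, Matrix.add_mul, Matrix.add_mul, e₁, e₂]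

open scoped ComplexOrder in
lemma mul_rpinv {a b : ℕ} {M : Matrix (Fin a) (Fin b) ℂ} (h : M.rank = a) : M * rpinv M = 1 := by
  have hu : IsUnit (M * Mᴴ) := by
    rw [← linearIndependent_rows_iff_isUnit, linearIndependent_iff_card_eq_finrank_span,
      Set.finrank, ← rank_eq_finrank_span_row, rank_self_mul_conjTranspose, h, Fintype.card_fin]
  rw [rpinv, ← Matrix.mul_assoc, Matrix.mul_nonsing_inv _ ((Matrix.isUnit_iff_isUnit_det _).1 hu)]

/-- Weighted residuals of the exact leading singular subspaces after randomized subspace iteration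
and truncation. -/
lemma norm_residual_colsL_le {k m₂ n₂ ρ : ℕ} (q : ℕ) (hk : 1 ≤ k)
    {A : Matrix (Fin (k + m₂)) (Fin (k + n₂)) ℂ}
    {U : Matrix (Fin (k + m₂)) (Fin (k + m₂)) ℂ}
    {V : Matrix (Fin (k + n₂)) (Fin (k + n₂)) ℂ} {σ : ℕ → ℝ}
    (hU : Uᴴ * U = 1) (hV : Vᴴ * V = 1)
    (hσ0 : ∀ i, 0 ≤ σ i) (hσm : ∀ i j, i ≤ j → σ j ≤ σ i)
    (hA : A = U * diagRect σ 0 (k + m₂) (k + n₂) * Vᴴ)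
    (hrank : 0 < σ (k - 1)) (hgap : σ k < σ (k - 1))
    {Ω : Matrix (Fin (k + n₂)) (Fin (k + ρ)) ℂ}
    (hΩ : ((colsL V)ᴴ * Ω).rank = k)
    {Q : Matrix (Fin (k + m₂)) (Fin (k + ρ)) ℂ} {R : Matrix (Fin (k + ρ)) (Fin (k + ρ)) ℂ}
    (hQ : Qᴴ * Q = 1) (hQR : (A * Aᴴ) ^ q * A * Ω = Q * R)
    {UB : Matrix (Fin (k + ρ)) (Fin (k + ρ)) ℂ} {Vh : Matrix (Fin (k + n₂)) (Fin (k + ρ)) ℂ}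
    {σh : ℕ → ℝ} (hUB : UBᴴ * UB = 1) (hVh : Vhᴴ * Vh = 1)
    (hσh0 : ∀ i, 0 ≤ σh i) (hσhm : ∀ i j, i ≤ j → σh j ≤ σh i)
    (hB : Qᴴ * A = UB * diagRect σh 0 (k + ρ) (k + ρ) * Vhᴴ) :
    ‖(1 - colsL (Q * UB) * (colsL (Q * UB))ᴴ) * colsL U * diagRect σ 0 k k‖ ≤
        σ k * ((σ k / σ (k - 1)) ^ (2 * q) *
          sval ((colsR V)ᴴ * Ω * rpinv ((colsL V)ᴴ * Ω)) 0 / (1 - σ k / σ (k - 1))) ∧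
      ‖(1 - colsL Vh * (colsL Vh)ᴴ) * colsL V * diagRect σ 0 k k‖ ≤
        σ k * ((σ k / σ (k - 1)) ^ (2 * q) *
          sval ((colsR V)ᴴ * Ω * rpinv ((colsL V)ᴴ * Ω)) 0 / (1 - σ k / σ (k - 1))) := by
  have hpos : ∀ i < k, 0 < σ i := fun i hi => hrank.trans_le (hσm _ _ (by omega))
  have hblock : A = colsL U * diagRect σ 0 k k * (colsL V)ᴴ +
      colsR U * diagRect σ k m₂ n₂ * (colsR V)ᴴ := by
    rw [hA, mul_diagRect_mul_conjTranspose]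
  have hU₁ := colsL_conjTranspose_mul_colsL hU
  have hU₂ := colsR_conjTranspose_mul_colsR hU
  have hU₁₂ := colsL_conjTranspose_mul_colsR hU
  have hV₁ := colsL_conjTranspose_mul_colsL hV
  have hV₂ := colsR_conjTranspose_mul_colsR hV
  have hV₁₂ := colsL_conjTranspose_mul_colsR hV
  have hS : ‖diagRect σ k m₂ n₂‖ ≤ σ k :=
    norm_diagRect_le (hσ0 k) fun i _ => by
      rw [abs_of_nonneg (hσ0 _)]; exact hσm _ _ (Nat.le_add_right _ _)
  have hD := diagRect_conjTranspose σ k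
  have hDD' := diagRect_mul_diagRect_inv hpos
  set D' := diagRect (fun i => (σ i)⁻¹) 0 k k
  have hD' : ‖D'‖ ≤ (σ (k - 1))⁻¹ :=
    norm_diagRect_le (inv_pos.2 hrank).le fun i hi => by
      rw [zero_add, abs_of_pos (inv_pos.2 (hpos i hi))]
      exact inv_anti₀ hrank (hσm _ _ (by omega))
  set W := (colsR V)ᴴ * Ω * rpinv ((colsL V)ᴴ * Ω)
  have hW : ‖W‖ ≤ sval W 0 := norm_le_sval_zero hk W
  have hW0 : 0 ≤ sval W 0 := (norm_nonneg _).trans hW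
  have hY := power_iteration_eq hblock hU₁ hU₂ hU₁₂ hV₁ hV₂ hV₁₂ hD hDD' q (mul_rpinv hΩ)
  have hH : ‖(diagRect σ k m₂ n₂ * (diagRect σ k m₂ n₂)ᴴ) ^ q * diagRect σ k m₂ n₂ * W *
      D' ^ (2 * q)‖ ≤ σ k * ((σ k / σ (k - 1)) ^ (2 * q) * sval W 0) := by
    have hSt : ‖(diagRect σ k m₂ n₂)ᴴ‖ ≤ σ k := by rwa [l2_opNorm_conjTranspose]
    refine (matrix_norm_mul_le (matrix_norm_mul_le (matrix_norm_mul_le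
      (matrix_norm_pow_le (matrix_norm_mul_le hS hSt) q) hS) hW)
      (matrix_norm_pow_le hD' (2 * q))).trans_eq ?_
    rw [div_pow, inv_pow, ← sq, ← pow_mul]
    ring
  have hPH : (1 - Q * Qᴴ) * (colsL U * diagRect σ 0 k k + colsR U *
      ((diagRect σ k m₂ n₂ * (diagRect σ k m₂ n₂)ᴴ) ^ q * diagRect σ k m₂ n₂ * W *
        D' ^ (2 * q))) = 0 := by
    rw [← hY, hQR, Matrix.mul_assoc Q, ← Matrix.mul_assoc (1 - Q * Qᴴ), Matrix.sub_mul 1,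
      Matrix.mul_assoc Q, hQ]
    simp
  have hT : (Q * UB)ᴴ * (Q * UB) = 1 := by
    rw [conjTranspose_mul, Matrix.mul_assoc, ← Matrix.mul_assoc Qᴴ, hQ, Matrix.one_mul, hUB]
  have hE := colsL_conjTranspose_mul_colsL hT
  have hET := colsL_conjTranspose_mul_colsR hT
  have hG := colsL_conjTranspose_mul_colsL hVh
  have hGT : (colsR Vh)ᴴ * colsL Vh = 0 := by
    simpa using congrArg conjTranspose (colsL_conjTranspose_mul_colsR hVh)
  have hPA : Q * Qᴴ * A = colsL (Q * UB) * diagRect σh 0 k k * (colsL Vh)ᴴ +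
      colsR (Q * UB) * diagRect σh k ρ ρ * (colsR Vh)ᴴ := by
    rw [← mul_diagRect_mul_conjTranspose, Matrix.mul_assoc, hB]
    simp only [Matrix.mul_assoc]
  have proj {a b : ℕ} {M : Matrix (Fin a) (Fin b) ℂ} (h : Mᴴ * M = 1) :
      (M * Mᴴ) * (M * Mᴴ) = M * Mᴴ := by
    rw [Matrix.mul_assoc, ← Matrix.mul_assoc Mᴴ, h, Matrix.one_mul]
  have nSh : ‖diagRect σh k ρ ρ‖ ≤ σ k :=
    norm_diagRect_le (hσ0 k) fun i hi => by
      rw [abs_of_nonneg (hσh0 _)]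
      exact (hσhm _ _ (Nat.le_add_right _ _)).trans (compressed_sval_le hblock hU₂ hV₂ hS hQ hUB
        hVh hσh0 hσhm hB (by omega))
  refine norm_residual_le hblock hU₁ hU₂ hU₁₂ hV₁ hV₂ hV₁₂ hD hDD' hrank (hσ0 k) hgap
    (mul_nonneg (pow_nonneg (div_nonneg (hσ0 _) hrank.le) _) hW0) hD' hS
    (P := Q * Qᴴ) (E := colsL (Q * UB) * (colsL (Q * UB))ᴴ) (G := colsL Vh * (colsL Vh)ᴴ)
    (by simp) (proj hQ) (by simp) (proj hE) (by simp) (proj hG) hH hPH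
    (N := colsR (Q * UB) * diagRect σh k ρ ρ * (colsR Vh)ᴴ) ?_ ?_ ?_
  · have n3 : ‖(colsR Vh)ᴴ‖ ≤ 1 := by
      rw [l2_opNorm_conjTranspose]
      exact norm_le_one_of_conjTranspose_mul_self (colsR_conjTranspose_mul_colsR hVh)
    simpa using matrix_norm_mul_le (matrix_norm_mul_le
      (norm_le_one_of_conjTranspose_mul_self (colsR_conjTranspose_mul_colsR hT)) nSh) n3
  · have c₁ : (1 - colsL (Q * UB) * (colsL (Q * UB))ᴴ) * colsL (Q * UB) = 0 := by
      rw [Matrix.sub_mul, Matrix.mul_assoc, hE]; simp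
    have c₂ : (1 - colsL (Q * UB) * (colsL (Q * UB))ᴴ) * colsR (Q * UB) = colsR (Q * UB) := by
      rw [Matrix.sub_mul, Matrix.mul_assoc, hET]; simp
    rw [hPA, Matrix.mul_add]
    simp only [← Matrix.mul_assoc, c₁, c₂, Matrix.zero_mul, zero_add]
  · have c₁ : (colsL Vh)ᴴ * (1 - colsL Vh * (colsL Vh)ᴴ) = 0 := by
      rw [Matrix.mul_sub, ← Matrix.mul_assoc, hG]; simp
    have c₂ : (colsR Vh)ᴴ * (1 - colsL Vh * (colsL Vh)ᴴ) = (colsR Vh)ᴴ := by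
      rw [Matrix.mul_sub, ← Matrix.mul_assoc, hGT]; simp
    rw [hPA, Matrix.add_mul, Matrix.mul_assoc _ (colsL Vh)ᴴ, c₁, Matrix.mul_assoc _ (colsR Vh)ᴴ, c₂]
    simp

end Norms

/-- Theorem 3.5 (individual canonical angles after rank-k truncation). -/
theorem individual_angles_truncated
    {k m₂ n₂ ρ : ℕ} (q : ℕ) (hk : 1 ≤ k)
    (A : Matrix (Fin (k + m₂)) (Fin (k + n₂)) ℂ)
    (U : Matrix (Fin (k + m₂)) (Fin (k + m₂)) ℂ)
    (V : Matrix (Fin (k + n₂)) (Fin (k + n₂)) ℂ)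
    (σ : ℕ → ℝ)
    (hU : Uᴴ * U = 1) (hU' : U * Uᴴ = 1)
    (hV : Vᴴ * V = 1) (hV' : V * Vᴴ = 1)
    (hσ0 : ∀ i, 0 ≤ σ i) (hσm : ∀ i j, i ≤ j → σ j ≤ σ i)
    (hA : A = U * diagRect σ 0 (k + m₂) (k + n₂) * Vᴴ)
    (hrank : 0 < σ (k - 1)) (hgap : σ k < σ (k - 1))
    (Ω : Matrix (Fin (k + n₂)) (Fin (k + ρ)) ℂ)
    (hΩ : ((colsL V)ᴴ * Ω).rank = k)
    (Q : Matrix (Fin (k + m₂)) (Fin (k + ρ)) ℂ)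
    (R : Matrix (Fin (k + ρ)) (Fin (k + ρ)) ℂ)
    (hQ : Qᴴ * Q = 1) (hR : R.BlockTriangular id)
    (hQR : (A * Aᴴ) ^ q * A * Ω = Q * R)
    (UB : Matrix (Fin (k + ρ)) (Fin (k + ρ)) ℂ)
    (Vh : Matrix (Fin (k + n₂)) (Fin (k + ρ)) ℂ)
    (σh : ℕ → ℝ)
    (hUB : UBᴴ * UB = 1) (hUB' : UB * UBᴴ = 1)
    (hVh : Vhᴴ * Vh = 1)
    (hσh0 : ∀ i, 0 ≤ σh i) (hσhm : ∀ i j, i ≤ j → σh j ≤ σh i)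
    (hB : Qᴴ * A = UB * diagRect σh 0 (k + ρ) (k + ρ) * Vhᴴ)
    :
    ∀ j : Fin k,
      max (sval ((1 - colsL (Q * UB) * (colsL (Q * UB))ᴴ) * colsL U) (k - 1 - (j : ℕ))) (sval ((1 - colsL Vh * (colsL Vh)ᴴ) * colsL V) (k - 1 - (j : ℕ))) ≤
        (σ k / σ (j : ℕ)) * ((σ k / σ (k - 1)) ^ (2 * q) / (1 - (σ k / σ (k - 1)))) * sval ((colsR V)ᴴ * Ω * rpinv ((colsL V)ᴴ * Ω)) 0 := by
  intro j
  rw [max_le_iff, div_mul_eq_mul_div, div_mul_eq_mul_div, mul_assoc, div_mul_eq_mul_div]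
  have hpos : ∀ i < k, 0 < σ i := fun i hi => hrank.trans_le (hσm _ _ (by omega))
  have h := norm_residual_colsL_le q hk hU hV hσ0 hσm hA hrank hgap hΩ hQ hQR hUB hVh hσh0 hσhm hB
  exact ⟨sval_le_of_norm_mul_diagRect hpos hσm h.1 j, sval_le_of_norm_mul_diagRect hpos hσm h.2 j⟩
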